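/- Let α ∈ (0,1) and F_τ^n(λ) as above. Then for every λ > 0 and n ≥ 1, λ^{-1} |E_{α,1}(-λ t_n^α) − F_τ^n(λ)| ≤ c τ t_n^{α-1}, with c independent of λ, n, τ. -/

import Mathlib

/-- The one-parameter Mittag-Leffler function `E_{α,1}(z) = ∑_{k=0}^∞ z^k / Γ(kα+1)`. -/
noncomputable def mittagLeffler (α z : ℝ) : ℝ :=
  ∑' k : ℕ, z ^ k / Real.Gamma (k * α + 1)

/-- The backward Euler convolution quadrature weights `b_j = (-1)^j binom(α, j)`,
with generating function `∑_j b_j ξ^j = (1-ξ)^α`. -/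
noncomputable def cqWeight (α : ℝ) (j : ℕ) : ℝ :=
  (-1) ^ j * (∏ i ∈ Finset.range j, (α - i)) / (Nat.factorial j)


/-!
After rescaling to unit step, with `μ = λ τ^α`, the function `u(t) = E_{α,1}(-μ t^α)` solves the
Volterra equation `u + μ (k_α ⋆ u) = 1` with `k_α(t) = t^(α-1) / Γ(α)`. Averaging against the Erlang
densities `e^{-s} s^m / m!` turns convolutions into Cauchy products and `k_α` into the generating
function `(1 - ξ)^(-α)`, the inverse of the quadrature symbol. Hence the scheme is solved exactly
by `F^{m+1} = E[u(S)]`, where `S` has mean and variance `n = m + 1`.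

It remains to estimate `E[u(S)] - u(n)`. If `|u(s) - u(n) - u'(n) (s - n)| ≤ K (s - n)²` for all
`s > 0`, the linear term averages out and the error is at most `K n`; so one needs
`K = C μ n^(α-2)` with `C` independent of `μ`. Here `u' = -μ r`, where `r` is the Volterra resolvent
of the log-convex kernel `k_α`. Log-convexity forces `0 < r ≤ k_α`, and the identity
`(t r)' = α (r - μ r ⋆ r)` then bounds `u''` near `n`; away from `n` the trivial bounds on `u`
suffice.
-/

open MeasureTheory Set Filter Topology PowerSeries
open Finset.HasAntidiagonal (antidiagonal mem_antidiagonal)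

section FracKernel

/-- The Riemann–Liouville kernel `t ^ (β - 1) / Γ(β)`: convolution with it on `(0, t)` is fractional
integration of order `β`. -/
noncomputable def fracKernel (β t : ℝ) : ℝ := t ^ (β - 1) / Real.Gamma β

variable {β γ t : ℝ}

@[simp] lemma fracKernel_one (t : ℝ) : fracKernel 1 t = 1 := by simp [fracKernel]

lemma fracKernel_pos (hβ : 0 < β) (ht : 0 < t) : 0 < fracKernel β t :=
  div_pos (Real.rpow_pos_of_pos ht _) (Real.Gamma_pos_of_pos hβ)

lemma mul_fracKernel (hβ : 0 < β) (ht : 0 < t) :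
    t * fracKernel β t = β * fracKernel (β + 1) t := by
  have hΓ := (Real.Gamma_pos_of_pos hβ).ne'
  rw [fracKernel, fracKernel, Real.Gamma_add_one hβ.ne', show β + 1 - 1 = (β - 1) + 1 by ring,
    Real.rpow_add_one ht.ne']
  field_simp

lemma fracKernel_nat_mul_add (α β : ℝ) (ht : 0 < t) (k : ℕ) :
    fracKernel (k * α + β) t = t ^ (β - 1) * ((t ^ α) ^ k / Real.Gamma (k * α + β)) := by
  rw [fracKernel, show (k : ℝ) * α + β - 1 = (β - 1) + α * k by ring, Real.rpow_add ht,
    Real.rpow_mul ht.le, Real.rpow_natCast, mul_div_assoc]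

lemma intervalIntegrable_rpow_mul_sub_rpow (hβ : 0 < β) (hγ : 0 < γ) (ht : 0 < t) :
    IntervalIntegrable (fun x => x ^ (β - 1) * (t - x) ^ (γ - 1)) volume 0 t := by
  have left_half {β γ : ℝ} (hβ : 0 < β) :
      IntervalIntegrable (fun x => x ^ (β - 1) * (t - x) ^ (γ - 1)) volume 0 (t / 2) := by
    refine (intervalIntegral.intervalIntegrable_rpow' (by linarith)).mul_continuousOn ?_
    refine ContinuousOn.rpow_const (by fun_prop) fun x hx => Or.inl ?_
    rw [uIcc_of_le (by linarith)] at hx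
    linarith [hx.2]
  have right_half := ((left_half (β := γ) (γ := β) hγ).comp_sub_left t).symm
  simp only [sub_zero, sub_sub_cancel, sub_half] at right_half
  exact (left_half hβ).trans (right_half.congr fun x _ => by ring)

lemma integral_rpow_mul_sub_rpow (hβ : 0 < β) (hγ : 0 < γ) (ht : 0 < t) :
    ∫ x in (0 : ℝ)..t, x ^ (β - 1) * (t - x) ^ (γ - 1) =
      t ^ (β + γ - 1) * ProbabilityTheory.beta β γ := by
  have complex_integral : ∫ x in (0 : ℝ)..t, ((x ^ (β - 1) * (t - x) ^ (γ - 1) : ℝ) : ℂ) =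
      ∫ x in (0 : ℝ)..t, (x : ℂ) ^ ((β : ℂ) - 1) * ((t : ℂ) - x) ^ ((γ : ℂ) - 1) := by
    refine intervalIntegral.integral_congr fun x hx => ?_
    rw [uIcc_of_le ht.le] at hx
    simp only [Complex.ofReal_mul, Complex.ofReal_cpow hx.1,
      Complex.ofReal_cpow (sub_nonneg.2 hx.2), Complex.ofReal_sub, Complex.ofReal_one]
  apply Complex.ofReal_injective
  rw [← intervalIntegral.integral_ofReal, complex_integral, Complex.betaIntegral_scaled _ _ ht,
    Complex.betaIntegral_eq_Gamma_mul_div _ _ (by simpa) (by simpa), ProbabilityTheory.beta]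
  push_cast [Complex.ofReal_cpow ht.le, ← Complex.Gamma_ofReal]
  rfl

lemma intervalIntegrable_fracKernel_conv (hβ : 0 < β) (hγ : 0 < γ) (ht : 0 < t) :
    IntervalIntegrable (fun x => fracKernel β x * fracKernel γ (t - x)) volume 0 t := by
  simpa only [fracKernel, div_mul_div_comm] using
    (intervalIntegrable_rpow_mul_sub_rpow hβ hγ ht).div_const _

lemma integral_fracKernel_conv (hβ : 0 < β) (hγ : 0 < γ) (ht : 0 < t) :
    ∫ x in (0 : ℝ)..t, fracKernel β x * fracKernel γ (t - x) = fracKernel (β + γ) t := by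
  have hΓβ := (Real.Gamma_pos_of_pos hβ).ne'
  have hΓγ := (Real.Gamma_pos_of_pos hγ).ne'
  simp only [fracKernel, div_mul_div_comm]
  rw [intervalIntegral.integral_div, integral_rpow_mul_sub_rpow hβ hγ ht, ProbabilityTheory.beta]
  field_simp

lemma intervalIntegrable_fracKernel (hβ : 0 < β) (ht : 0 < t) :
    IntervalIntegrable (fracKernel β) volume 0 t := by
  simpa using intervalIntegrable_fracKernel_conv hβ one_pos ht

lemma integral_fracKernel (hβ : 0 < β) (ht : 0 < t) :
    ∫ x in (0 : ℝ)..t, fracKernel β x = fracKernel (β + 1) t := by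
  simpa using integral_fracKernel_conv hβ one_pos ht

lemma antitoneOn_fracKernel (hβ : 0 < β) (hβ1 : β ≤ 1) : AntitoneOn (fracKernel β) (Ioi 0) :=
  fun _ hs _ _ hst => div_le_div_of_nonneg_right
    (Real.rpow_le_rpow_of_nonpos hs hst (by linarith)) (Real.Gamma_pos_of_pos hβ).le

lemma fracKernel_half_le (hβ : 0 < β) (ht : 0 < t) :
    fracKernel β (t / 2) ≤ 2 * fracKernel β t := by
  have two_rpow_le : (2 : ℝ) ^ (1 - β) ≤ 2 := by
    simpa using Real.rpow_le_rpow_of_exponent_le one_le_two (by linarith : 1 - β ≤ 1)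
  calc fracKernel β (t / 2) = 2 ^ (1 - β) * fracKernel β t := by
        rw [fracKernel, fracKernel, Real.div_rpow ht.le two_pos.le, ← neg_sub β 1,
          Real.rpow_neg two_pos.le]
        ring
    _ ≤ 2 * fracKernel β t := by gcongr; exact (fracKernel_pos hβ ht).le

end FracKernel

section MittagLefflerSeries

lemma rpow_mul_exp_neg_le_Gamma {y R : ℝ} (hy : 1 ≤ y) (hR : 0 < R) :
    R ^ (y - 1) * Real.exp (-R) ≤ Real.Gamma y := by
  have integrable_gamma := Real.GammaIntegral_convergent (s := y) (by linarith)
  have tail_subset : Ioi R ⊆ Ioi 0 := Ioi_subset_Ioi hR.le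
  rw [Real.Gamma_eq_integral (by linarith)]
  calc R ^ (y - 1) * Real.exp (-R) = ∫ x in Ioi R, Real.exp (-x) * R ^ (y - 1) := by
        rw [integral_mul_const, integral_exp_neg_Ioi, mul_comm]
    _ ≤ ∫ x in Ioi R, Real.exp (-x) * x ^ (y - 1) := by
        refine setIntegral_mono_on ((integrableOn_exp_neg_Ioi R).mul_const _)
          (integrable_gamma.mono_set tail_subset) measurableSet_Ioi fun x hx => ?_
        have hRx : R ≤ x := hx.le
        gcongr
    _ ≤ ∫ x in Ioi 0, Real.exp (-x) * x ^ (y - 1) :=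
        setIntegral_mono_set integrable_gamma
          (ae_restrict_of_forall_mem measurableSet_Ioi fun x hx =>
            mul_nonneg (Real.exp_pos _).le (Real.rpow_nonneg hx.le _))
          tail_subset.eventuallyLE

lemma summable_pow_div_Gamma {α : ℝ} (hα : 0 < α) (β x : ℝ) :
    Summable fun k : ℕ => x ^ k / Real.Gamma (k * α + β) := by
  set y := |x| + 1
  have hy : 0 < y := by positivity
  -- With `R ^ α = 2 y`, the lower bound on `Γ` makes the terms `O(2 ^ (-k))`.
  set R := (2 * y) ^ α⁻¹
  have hR : 0 < R := by positivity
  have hRα : R ^ α = 2 * y := Real.rpow_inv_rpow (by positivity) hα.ne'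
  refine .of_norm_bounded_eventually_nat
    (g := fun k : ℕ => (1 / 2 : ℝ) ^ k * (Real.exp R / R ^ (β - 1)))
    ((summable_geometric_of_lt_one (by norm_num) (by norm_num)).mul_right _) ?_
  have argument_tendsto : Tendsto (fun k : ℕ => (k : ℝ) * α + β) atTop atTop :=
    tendsto_atTop_add_const_right _ _ (tendsto_natCast_atTop_atTop.atTop_mul_const hα)
  filter_upwards [argument_tendsto.eventually_ge_atTop 1] with k hk
  have Gamma_ge : (2 * y) ^ k * R ^ (β - 1) * Real.exp (-R) ≤ Real.Gamma (k * α + β) := by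
    convert rpow_mul_exp_neg_le_Gamma hk hR using 2
    rw [show (k : ℝ) * α + β - 1 = α * k + (β - 1) by ring, Real.rpow_add hR,
      Real.rpow_mul hR.le, hRα, Real.rpow_natCast]
  rw [norm_div, norm_pow, Real.norm_eq_abs, Real.norm_eq_abs,
    abs_of_pos (Real.Gamma_pos_of_pos (by linarith))]
  calc |x| ^ k / Real.Gamma (k * α + β)
      ≤ y ^ k / ((2 * y) ^ k * R ^ (β - 1) * Real.exp (-R)) := by
        gcongr
        exact (lt_add_one _).le
    _ = (1 / 2) ^ k * (Real.exp R / R ^ (β - 1)) := by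
        rw [Real.exp_neg, mul_pow, div_pow, one_pow]
        field_simp

/-- Power series with positive radius of convergence, encoded by a geometric bound on the
coefficients. -/
def GeomBounded (A : ℝ⟦X⟧) : Prop :=
  ∃ C M : ℝ, 0 ≤ C ∧ 0 ≤ M ∧ ∀ k, |coeff k A| ≤ C * M ^ k

namespace GeomBounded

lemma C (c : ℝ) : GeomBounded (C c) :=
  ⟨|c|, 1, abs_nonneg c, zero_le_one, fun k => by rw [coeff_C]; split_ifs <;> simp⟩

lemma one : GeomBounded 1 := by simpa using GeomBounded.C 1

lemma X : GeomBounded X :=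
  ⟨1, 1, zero_le_one, zero_le_one, fun k => by rw [coeff_X]; split_ifs <;> simp⟩

lemma mul {A B : ℝ⟦X⟧} : GeomBounded A → GeomBounded B → GeomBounded (A * B) := by
  rintro ⟨C, M, hC, hM, hA⟩ ⟨D, N, hD, hN, hB⟩
  set K := max M N
  have : 0 ≤ K := hM.trans (le_max_left _ _)
  refine ⟨C * D, 2 * K, by positivity, by positivity, fun n => ?_⟩
  have term_le : ∀ p ∈ antidiagonal n, |coeff p.1 A * coeff p.2 B| ≤ C * D * K ^ n := by
    intro p hp
    calc |coeff p.1 A * coeff p.2 B| ≤ (C * K ^ p.1) * (D * K ^ p.2) := by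
          rw [abs_mul]
          gcongr
          · exact (hA _).trans (by gcongr; exact le_max_left _ _)
          · exact (hB _).trans (by gcongr; exact le_max_right _ _)
      _ = C * D * K ^ n := by rw [← mem_antidiagonal.1 hp, pow_add]; ring
  have succ_le_two_pow : ((n + 1 : ℕ) : ℝ) ≤ 2 ^ n := mod_cast Nat.lt_two_pow_self (n := n)
  calc |coeff n (A * B)| ≤ ∑ p ∈ antidiagonal n, |coeff p.1 A * coeff p.2 B| := by
        rw [coeff_mul]; exact Finset.abs_sum_le_sum_abs _ _
    _ ≤ (n + 1 : ℕ) * (C * D * K ^ n) := by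
        simpa using Finset.sum_le_card_nsmul _ _ _ term_le
    _ ≤ 2 ^ n * (C * D * K ^ n) := by gcongr
    _ = C * D * (2 * K) ^ n := by ring

lemma mk_abs {A : ℝ⟦X⟧} : GeomBounded A → GeomBounded (PowerSeries.mk fun k => |coeff k A|)
  | ⟨C, M, hC, hM, hA⟩ => ⟨C, M, hC, hM, fun k => by simpa using hA k⟩

end GeomBounded

/-- The series `∑ a_k x ^ k / Γ(k α + β)`, for `A = ∑ a_k X ^ k`; the two-parameter Mittag-Leffler
function `E_{α,β}` is the case `a_k = 1`. -/
noncomputable def mlSeries (α β : ℝ) (A : ℝ⟦X⟧) (x : ℝ) : ℝ :=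
  ∑' k : ℕ, coeff k A * (x ^ k / Real.Gamma (k * α + β))

variable {α β : ℝ} {A : ℝ⟦X⟧}

lemma norm_mlSeries_term (hα : 0 < α) (hβ : 0 < β) (A : ℝ⟦X⟧) (x : ℝ) (k : ℕ) :
    ‖coeff k A * (x ^ k / Real.Gamma (k * α + β))‖ =
      |coeff k A| * (|x| ^ k / Real.Gamma (k * α + β)) := by
  simp only [norm_mul, norm_div, norm_pow, Real.norm_eq_abs,
    abs_of_pos (Real.Gamma_pos_of_pos (by positivity : 0 < k * α + β))]

lemma GeomBounded.summable_abs_mlSeries (hA : GeomBounded A) (hα : 0 < α) (hβ : 0 < β) (x : ℝ) :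
    Summable fun k : ℕ => |coeff k A| * (|x| ^ k / Real.Gamma (k * α + β)) := by
  obtain ⟨C, M, -, -, hA⟩ := hA
  have Gamma_pos (k : ℕ) : 0 < Real.Gamma (k * α + β) := Real.Gamma_pos_of_pos (by positivity)
  refine .of_nonneg_of_le (fun k => ?_) (fun k => ?_)
    ((summable_pow_div_Gamma hα β (M * |x|)).mul_left C)
  · have := Gamma_pos k
    positivity
  · have := Gamma_pos k
    calc |coeff k A| * (|x| ^ k / Real.Gamma (k * α + β))
        ≤ C * M ^ k * (|x| ^ k / Real.Gamma (k * α + β)) := by gcongr; exact hA k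
      _ = C * ((M * |x|) ^ k / Real.Gamma (k * α + β)) := by ring

lemma GeomBounded.continuous_mlSeries (hA : GeomBounded A) (hα : 0 < α) (hβ : 0 < β) :
    Continuous (mlSeries α β A) := by
  refine continuous_iff_continuousAt.2 fun x₀ => ?_
  have continuousOn_ball : ContinuousOn (mlSeries α β A) (Metric.ball 0 (|x₀| + 1)) := by
    refine continuousOn_tsum (fun k => by fun_prop)
      (hA.summable_abs_mlSeries hα hβ (|x₀| + 1)) fun k x hx => ?_
    have hx' : |x| ≤ |(|x₀| + 1)| := by
      rw [abs_of_pos (by positivity : 0 < |x₀| + 1)]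
      exact (mem_ball_zero_iff.1 hx).le
    have := Real.Gamma_pos_of_pos (by positivity : 0 < k * α + β)
    rw [norm_mlSeries_term hα hβ]
    gcongr
  exact continuousOn_ball.continuousAt (Metric.isOpen_ball.mem_nhds (by simp))

lemma mlSeries_zero (α β : ℝ) (A : ℝ⟦X⟧) :
    mlSeries α β A 0 = constantCoeff A / Real.Gamma β := by
  rw [mlSeries, tsum_eq_single 0 fun k hk => by simp [hk]]
  simp [div_eq_mul_inv]

end MittagLefflerSeries

lemma summable_of_summable_sum_antidiagonal {f : ℕ × ℕ → ℝ} (hf : ∀ p, 0 ≤ f p)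
    (h : Summable fun n => ∑ p ∈ antidiagonal n, f p) : Summable f := by
  refine Finset.HasAntidiagonal.sigmaAntidiagonalEquivProd.summable_iff.1 <|
    (summable_sigma_of_nonneg fun _ => hf _).2
      ⟨fun n => (hasSum_fintype _).summable, h.congr fun n => ?_⟩
  rw [tsum_fintype]
  exact (Finset.sum_attach _ f).symm

lemma hasSum_sum_antidiagonal {f : ℕ × ℕ → ℝ} {s : ℝ} (h : HasSum f s) :
    HasSum (fun n => ∑ p ∈ antidiagonal n, f p) s := by
  rw [← Finset.HasAntidiagonal.sigmaAntidiagonalEquivProd.hasSum_iff] at h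
  have sum_fiber (n : ℕ) : HasSum (fun p : antidiagonal n => f p) (∑ p ∈ antidiagonal n, f p) := by
    rw [← Finset.sum_attach]
    exact hasSum_fintype _
  exact h.sigma sum_fiber

section FracSeries

/-- The series `∑ a_k t ^ (k α + β - 1) / Γ(k α + β)`, for `A = ∑ a_k X ^ k`: formally, `A`
evaluated at fractional integration of order `α` and applied to `fracKernel β`. The singular factor
`t ^ (β - 1)` is taken out of the sum. -/
noncomputable def fracSeries (α β : ℝ) (A : ℝ⟦X⟧) (t : ℝ) : ℝ :=
  t ^ (β - 1) * mlSeries α β A (t ^ α)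

variable {α β γ t : ℝ} {A B : ℝ⟦X⟧}

lemma summable_abs_fracSeries (hA : GeomBounded A) (hα : 0 < α) (hβ : 0 < β) (ht : 0 < t) :
    Summable fun k : ℕ => |coeff k A| * fracKernel (k * α + β) t := by
  refine ((hA.summable_abs_mlSeries hα hβ (t ^ α)).mul_left (t ^ (β - 1))).congr fun k => ?_
  rw [fracKernel_nat_mul_add α β ht, abs_of_pos (Real.rpow_pos_of_pos ht α)]
  ring

lemma summable_norm_fracSeries (hA : GeomBounded A) (hα : 0 < α) (hβ : 0 < β) (ht : 0 < t) :
    Summable fun k : ℕ => ‖coeff k A * fracKernel (k * α + β) t‖ := by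
  refine (summable_abs_fracSeries hA hα hβ ht).congr fun k => ?_
  rw [norm_mul, Real.norm_eq_abs, Real.norm_eq_abs, abs_of_pos (fracKernel_pos (by positivity) ht)]

lemma fracSeries_eq_tsum (α β : ℝ) (A : ℝ⟦X⟧) (ht : 0 < t) :
    fracSeries α β A t = ∑' k : ℕ, coeff k A * fracKernel (k * α + β) t := by
  rw [fracSeries, mlSeries, ← tsum_mul_left]
  congr 1
  ext k
  rw [fracKernel_nat_mul_add α β ht, mul_left_comm]

lemma hasSum_fracSeries (hA : GeomBounded A) (hα : 0 < α) (hβ : 0 < β) (ht : 0 < t) :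
    HasSum (fun k : ℕ => coeff k A * fracKernel (k * α + β) t) (fracSeries α β A t) := by
  rw [fracSeries_eq_tsum α β A ht]
  exact (summable_norm_fracSeries hA hα hβ ht).of_norm.hasSum

lemma fracSeries_one_right (α β t : ℝ) : fracSeries α β 1 t = fracKernel β t := by
  rw [fracSeries, mlSeries, tsum_eq_single 0 fun k hk => by simp [coeff_one, hk], fracKernel]
  simp [div_eq_mul_inv]

lemma continuousOn_fracSeries (hA : GeomBounded A) (hα : 0 < α) (hβ : 0 < β) :
    ContinuousOn (fracSeries α β A) (Ioi 0) := by
  refine ContinuousOn.mul ?_ ((hA.continuous_mlSeries hα hβ).comp_continuousOn ?_) <;>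
  exact continuousOn_id.rpow_const fun x hx => Or.inl hx.ne'

lemma exists_abs_fracSeries_le (hA : GeomBounded A) (hα : 0 < α) (hβ : 0 < β) (T : ℝ) :
    ∃ C, 0 ≤ C ∧ ∀ t ∈ Ioc 0 T, |fracSeries α β A t| ≤ C * t ^ (β - 1) := by
  obtain ⟨C, hC⟩ := (isCompact_Icc (a := 0) (b := T ^ α)).exists_bound_of_continuousOn
    (hA.continuous_mlSeries hα hβ).continuousOn
  refine ⟨|C|, abs_nonneg C, fun t ⟨ht, htT⟩ => ?_⟩
  have htα : t ^ α ∈ Icc 0 (T ^ α) := ⟨by positivity, by gcongr⟩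
  rw [fracSeries, abs_mul, abs_of_pos (Real.rpow_pos_of_pos ht _), mul_comm]
  exact mul_le_mul_of_nonneg_right ((hC _ htα).trans (le_abs_self C)) (by positivity)

lemma intervalIntegrable_fracSeries_conv (hA : GeomBounded A) (hB : GeomBounded B) (hα : 0 < α)
    (hβ : 0 < β) (hγ : 0 < γ) (ht : 0 < t) :
    IntervalIntegrable (fun x => fracSeries α β A x * fracSeries α γ B (t - x)) volume 0 t := by
  obtain ⟨C, hC, hAle⟩ := exists_abs_fracSeries_le hA hα hβ t
  obtain ⟨D, -, hBle⟩ := exists_abs_fracSeries_le hB hα hγ t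
  have majorant := (intervalIntegrable_rpow_mul_sub_rpow hβ hγ ht).const_mul (C * D)
  rw [intervalIntegrable_iff_integrableOn_Ioo_of_le ht.le] at majorant ⊢
  refine majorant.mono' (ContinuousOn.aestronglyMeasurable (.mul ?_ ?_) measurableSet_Ioo)
    (ae_restrict_of_forall_mem measurableSet_Ioo fun x ⟨hx, hxt⟩ => ?_)
  · exact (continuousOn_fracSeries hA hα hβ).mono fun x hx => hx.1
  · exact (continuousOn_fracSeries hB hα hγ).comp (by fun_prop) fun x hx => sub_pos.2 hx.2
  · calc ‖fracSeries α β A x * fracSeries α γ B (t - x)‖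
        ≤ C * x ^ (β - 1) * (D * (t - x) ^ (γ - 1)) := by
          rw [norm_mul]
          gcongr
          · exact hAle x ⟨hx, hxt.le⟩
          · exact hBle (t - x) ⟨sub_pos.2 hxt, by linarith⟩
      _ = C * D * (x ^ (β - 1) * (t - x) ^ (γ - 1)) := by ring

lemma summable_abs_fracSeries_mul (hA : GeomBounded A) (hB : GeomBounded B) (hα : 0 < α)
    (hβ : 0 < β) (ht : 0 < t) :
    Summable fun p : ℕ × ℕ =>
      |coeff p.1 A * coeff p.2 B| * fracKernel ((p.1 + p.2 : ℕ) * α + β) t := by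
  refine summable_of_summable_sum_antidiagonal
    (fun p => mul_nonneg (abs_nonneg _) (fracKernel_pos (by positivity) ht).le)
    ((summable_abs_fracSeries (hA.mk_abs.mul hB.mk_abs) hα hβ ht).congr fun n => ?_)
  rw [coeff_mul, abs_of_nonneg (Finset.sum_nonneg fun p _ => by simp only [coeff_mk]; positivity),
    Finset.sum_mul]
  refine Finset.sum_congr rfl fun p hp => ?_
  rw [mem_antidiagonal.1 hp, coeff_mk, coeff_mk, abs_mul]

lemma integral_fracSeries_conv (hA : GeomBounded A) (hB : GeomBounded B) (hα : 0 < α)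
    (hβ : 0 < β) (hγ : 0 < γ) (ht : 0 < t) :
    ∫ x in (0 : ℝ)..t, fracSeries α β A x * fracSeries α γ B (t - x) =
      fracSeries α (β + γ) (A * B) t := by
  let term (p : ℕ × ℕ) (x : ℝ) : ℝ := (coeff p.1 A * coeff p.2 B) *
    (fracKernel (p.1 * α + β) x * fracKernel (p.2 * α + γ) (t - x))
  have integral_term (c : ℝ) (p : ℕ × ℕ) :
      ∫ x in Ioo 0 t, c * (fracKernel (p.1 * α + β) x * fracKernel (p.2 * α + γ) (t - x)) =
        c * fracKernel ((p.1 + p.2 : ℕ) * α + (β + γ)) t := by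
    rw [integral_const_mul, ← integral_Ioc_eq_integral_Ioo, ← intervalIntegral.integral_of_le ht.le,
      integral_fracKernel_conv (by positivity) (by positivity) ht]
    congr 2
    push_cast
    ring
  have integrable_term (p : ℕ × ℕ) : Integrable (term p) (volume.restrict (Ioo 0 t)) :=
    ((intervalIntegrable_iff_integrableOn_Ioo_of_le ht.le).1
      (intervalIntegrable_fracKernel_conv (by positivity) (by positivity) ht)).const_mul _
  have integral_norm_term (p : ℕ × ℕ) : ∫ x in Ioo 0 t, ‖term p x‖ =
      |coeff p.1 A * coeff p.2 B| * fracKernel ((p.1 + p.2 : ℕ) * α + (β + γ)) t := by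
    rw [← integral_term]
    refine setIntegral_congr_fun measurableSet_Ioo fun x hx => ?_
    simp only [term, norm_mul (_ * _) (_ * _), Real.norm_eq_abs, abs_of_pos (mul_pos
      (fracKernel_pos (by positivity : 0 < p.1 * α + β) hx.1)
      (fracKernel_pos (by positivity : 0 < p.2 * α + γ) (sub_pos.2 hx.2)))]
  have tsum_term : ∀ x ∈ Ioo 0 t,
      ∑' p, term p x = fracSeries α β A x * fracSeries α γ B (t - x) := fun x hx => by
    rw [fracSeries_eq_tsum α β A hx.1, fracSeries_eq_tsum α γ B (sub_pos.2 hx.2),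
      tsum_mul_tsum_of_summable_norm (summable_norm_fracSeries hA hα hβ hx.1)
        (summable_norm_fracSeries hB hα hγ (sub_pos.2 hx.2))]
    exact tsum_congr fun p => mul_mul_mul_comm _ _ _ _
  have hasSum_integral := hasSum_sum_antidiagonal <|
    hasSum_integral_of_summable_integral_norm integrable_term
      ((summable_abs_fracSeries_mul hA hB hα (add_pos hβ hγ) ht).congr
        fun p => (integral_norm_term p).symm)
  rw [intervalIntegral.integral_of_le ht.le, integral_Ioc_eq_integral_Ioo,
    ← setIntegral_congr_fun measurableSet_Ioo tsum_term]
  refine hasSum_integral.unique ((hasSum_fracSeries (hA.mul hB) hα (add_pos hβ hγ) ht).congr_fun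
    fun n => ?_)
  rw [coeff_mul, Finset.sum_mul]
  refine Finset.sum_congr rfl fun p hp => ?_
  rw [integral_term, mem_antidiagonal.1 hp]

lemma intervalIntegrable_fracSeries (hA : GeomBounded A) (hα : 0 < α) (hβ : 0 < β) (ht : 0 < t) :
    IntervalIntegrable (fracSeries α β A) volume 0 t := by
  simpa [fracSeries_one_right] using
    intervalIntegrable_fracSeries_conv hA GeomBounded.one hα hβ one_pos ht

lemma integral_fracSeries (hA : GeomBounded A) (hα : 0 < α) (hβ : 0 < β) (ht : 0 < t) :
    ∫ x in (0 : ℝ)..t, fracSeries α β A x = fracSeries α (β + 1) A t := by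
  simpa [fracSeries_one_right] using
    integral_fracSeries_conv hA GeomBounded.one hα hβ one_pos ht

lemma hasDerivAt_fracSeries_add_one (hA : GeomBounded A) (hα : 0 < α) (hβ : 0 < β) (ht : 0 < t) :
    HasDerivAt (fracSeries α (β + 1) A) (fracSeries α β A t) t := by
  have continuousOn_pos := continuousOn_fracSeries hA hα hβ
  have deriv_integral := intervalIntegral.integral_hasDerivAt_right
    (intervalIntegrable_fracSeries hA hα hβ ht)
    (continuousOn_pos.stronglyMeasurableAtFilter isOpen_Ioi t ht)
    (continuousOn_pos.continuousAt (Ioi_mem_nhds ht))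
  refine deriv_integral.congr_of_eventuallyEq ?_
  filter_upwards [Ioi_mem_nhds ht] with s hs
  exact (integral_fracSeries hA hα hβ hs).symm

lemma fracSeries_add (hA : GeomBounded A) (hB : GeomBounded B) (hα : 0 < α) (hβ : 0 < β)
    (ht : 0 < t) : fracSeries α β (A + B) t = fracSeries α β A t + fracSeries α β B t := by
  rw [fracSeries_eq_tsum α β _ ht]
  simpa only [map_add, add_mul] using
    ((hasSum_fracSeries hA hα hβ ht).add (hasSum_fracSeries hB hα hβ ht)).tsum_eq

lemma fracSeries_C_mul (α β c : ℝ) (A : ℝ⟦X⟧) (ht : 0 < t) :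
    fracSeries α β (C c * A) t = c * fracSeries α β A t := by
  simp only [fracSeries_eq_tsum α β _ ht, coeff_C_mul, mul_assoc, tsum_mul_left]

lemma fracSeries_X_mul (hA : GeomBounded A) (hα : 0 < α) (hβ : 0 < β) (ht : 0 < t) :
    fracSeries α β (X * A) t = fracSeries α (α + β) A t := by
  have hasSum_shift := (hasSum_nat_add_iff' 1).2 (hasSum_fracSeries (.mul .X hA) hα hβ ht)
  simp only [Finset.range_one, Finset.sum_singleton, coeff_zero_X_mul, zero_mul, sub_zero,
    coeff_succ_X_mul, Nat.cast_add, Nat.cast_one, add_one_mul, add_assoc] at hasSum_shift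
  rw [fracSeries_eq_tsum α (α + β) A ht, hasSum_shift.tsum_eq]

lemma fracSeries_add_C_mul_X_mul (hA : GeomBounded A) (hα : 0 < α) (hβ : 0 < β) (c : ℝ)
    (ht : 0 < t) : fracSeries α β (A + C c * (X * A)) t =
      fracSeries α β A t + c * fracSeries α (α + β) A t := by
  rw [fracSeries_add hA (.mul (.C c) (.mul .X hA)) hα hβ ht, fracSeries_C_mul α β c _ ht,
    fracSeries_X_mul hA hα hβ ht]

lemma mul_fracSeries_self (hα : 0 < α) (A : ℝ⟦X⟧) (ht : 0 < t) :
    t * fracSeries α α A t = α * fracSeries α (α + 1) (d⁄dX ℝ (X * A)) t := by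
  rw [fracSeries_eq_tsum α α A ht, fracSeries_eq_tsum α (α + 1) _ ht, ← tsum_mul_left,
    ← tsum_mul_left]
  refine tsum_congr fun k => ?_
  rw [mul_left_comm, mul_fracKernel (by positivity) ht, coeff_derivative, coeff_succ_X_mul,
    add_assoc]
  ring

end FracSeries

section Relaxation

/-- The expansion of the resolvent symbol `(1 + μ X)⁻¹`. -/
noncomputable def resolventSymbol (μ : ℝ) : ℝ⟦X⟧ := PowerSeries.mk fun k => (-μ) ^ k

variable {α μ t : ℝ}

lemma geomBounded_resolventSymbol (μ : ℝ) : GeomBounded (resolventSymbol μ) :=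
  ⟨1, |μ|, zero_le_one, abs_nonneg μ, fun k => by simp [resolventSymbol, abs_pow]⟩

lemma resolventSymbol_add (μ : ℝ) :
    resolventSymbol μ + C μ * (X * resolventSymbol μ) = 1 := by
  ext (_ | k)
  · rw [map_add, coeff_C_mul, coeff_zero_X_mul]
    simp [resolventSymbol, -coeff_zero_eq_constantCoeff]
  · rw [map_add, coeff_C_mul, coeff_succ_X_mul]
    simp [resolventSymbol, coeff_one, pow_succ, mul_comm]

lemma resolventSymbol_mul_self_add (μ : ℝ) :
    resolventSymbol μ * resolventSymbol μ +
      C μ * (X * (resolventSymbol μ * resolventSymbol μ)) = resolventSymbol μ := by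
  linear_combination resolventSymbol μ * resolventSymbol_add μ

lemma derivative_X_mul_resolventSymbol (μ : ℝ) :
    d⁄dX ℝ (X * resolventSymbol μ) = resolventSymbol μ * resolventSymbol μ := by
  ext n
  have term_eq : ∀ p ∈ antidiagonal n, (-μ) ^ p.1 * (-μ) ^ p.2 = (-μ) ^ n := fun p hp => by
    rw [← pow_add, mem_antidiagonal.1 hp]
  rw [coeff_derivative, coeff_succ_X_mul, coeff_mul]
  simp only [resolventSymbol, coeff_mk, Finset.sum_congr rfl term_eq]
  simp [mul_comm]

/-- The solution `u(t) = E_{α,1}(-μ t ^ α)` of the fractional relaxation equation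
`u + μ (fracKernel α ⋆ u) = 1`. -/
noncomputable def relaxation (α μ : ℝ) : ℝ → ℝ := fracSeries α 1 (resolventSymbol μ)

/-- The resolvent kernel `r(t) = t ^ (α - 1) E_{α,α}(-μ t ^ α)`, which solves
`r + μ (fracKernel α ⋆ r) = fracKernel α`. -/
noncomputable def relaxationKernel (α μ : ℝ) : ℝ → ℝ := fracSeries α α (resolventSymbol μ)

lemma mittagLeffler_eq_relaxation (α μ t : ℝ) :
    mittagLeffler α (-(μ * t ^ α)) = relaxation α μ t := by
  rw [relaxation, fracSeries, mlSeries, mittagLeffler, sub_self, Real.rpow_zero, one_mul]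
  refine tsum_congr fun k => ?_
  rw [resolventSymbol, coeff_mk, neg_mul_eq_neg_mul, mul_pow, mul_div_assoc]

lemma fracSeries_resolventSymbol_add {β : ℝ} (hα : 0 < α) (hβ : 0 < β) (μ : ℝ) (ht : 0 < t) :
    fracSeries α β (resolventSymbol μ) t + μ * fracSeries α (α + β) (resolventSymbol μ) t =
      fracKernel β t := by
  rw [← fracSeries_add_C_mul_X_mul (geomBounded_resolventSymbol μ) hα hβ μ ht,
    resolventSymbol_add, fracSeries_one_right]

lemma fracSeries_resolventSymbol_volterra {β : ℝ} (hα : 0 < α) (hβ : 0 < β) (μ : ℝ) (ht : 0 < t) :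
    fracSeries α β (resolventSymbol μ) t +
      μ * ∫ x in (0 : ℝ)..t, fracSeries α β (resolventSymbol μ) x * fracKernel α (t - x) =
        fracKernel β t := by
  rw [← fracSeries_resolventSymbol_add hα hβ μ ht, add_comm α]
  simp only [← fracSeries_one_right α α]
  rw [integral_fracSeries_conv (geomBounded_resolventSymbol μ) .one hα hβ hα ht, mul_one]

lemma relaxation_add_integral (hα : 0 < α) (μ : ℝ) (ht : 0 < t) :
    relaxation α μ t + μ * ∫ x in (0 : ℝ)..t, relaxationKernel α μ x = 1 := by
  rw [relaxation, relaxationKernel, integral_fracSeries (geomBounded_resolventSymbol μ) hα hα ht,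
    fracSeries_resolventSymbol_add hα one_pos μ ht, fracKernel_one]

lemma hasDerivAt_relaxation (hα : 0 < α) (μ : ℝ) (ht : 0 < t) :
    HasDerivAt (relaxation α μ) (-(μ * relaxationKernel α μ t)) t := by
  have deriv_succ := hasDerivAt_fracSeries_add_one (geomBounded_resolventSymbol μ) hα hα ht
  refine ((deriv_succ.const_mul μ).const_sub 1).congr_of_eventuallyEq ?_
  filter_upwards [Ioi_mem_nhds ht] with s hs
  rw [relaxation, eq_sub_iff_add_eq, fracSeries_resolventSymbol_add hα one_pos μ hs, fracKernel_one]

-- `d/dX (X R) = R²` turns the Euler operator `t ↦ (t r)'` into a convolution square.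
lemma hasDerivAt_relaxationKernel (hα : 0 < α) (μ : ℝ) (ht : 0 < t) :
    HasDerivAt (relaxationKernel α μ)
      ((α * (relaxationKernel α μ t -
        μ * ∫ x in (0 : ℝ)..t, relaxationKernel α μ x * relaxationKernel α μ (t - x)) -
          relaxationKernel α μ t) / t) t := by
  have hR := geomBounded_resolventSymbol μ
  have hRR := hR.mul hR
  set w := fracSeries α α (resolventSymbol μ * resolventSymbol μ)
  have w_eq : w t = relaxationKernel α μ t -
      μ * ∫ x in (0 : ℝ)..t, relaxationKernel α μ x * relaxationKernel α μ (t - x) := by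
    simp only [relaxationKernel]
    rw [integral_fracSeries_conv hR hR hα hα hα ht, eq_sub_iff_add_eq,
      ← fracSeries_add_C_mul_X_mul hRR hα hα μ ht, resolventSymbol_mul_self_add]
  have kernel_eq : ∀ s ∈ Ioi (0 : ℝ), relaxationKernel α μ s =
      α * fracSeries α (α + 1) (resolventSymbol μ * resolventSymbol μ) s / s := fun s hs => by
    rw [← derivative_X_mul_resolventSymbol, ← mul_fracSeries_self hα _ hs, relaxationKernel,
      mul_div_cancel_left₀ _ hs.ne']
  have deriv_quotient :=
    ((hasDerivAt_fracSeries_add_one hRR hα hα ht).const_mul α).div (hasDerivAt_id t) ht.ne'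
  rw [← w_eq]
  refine (deriv_quotient.congr_of_eventuallyEq
    (eventually_of_mem (Ioi_mem_nhds ht) kernel_eq)).congr_deriv ?_
  rw [kernel_eq t ht]
  simp only [id, w]
  field_simp

end Relaxation

section VolterraResolvent

/-- Positive, nonincreasing, log-convex convolution kernels on `(0, ∞)`, integrable at `0`. Such a
kernel has a positive resolvent. -/
structure LogConvexKernel (k : ℝ → ℝ) : Prop where
  pos : ∀ ⦃t⦄, 0 < t → 0 < k t
  antitoneOn : AntitoneOn k (Ioi 0)
  mul_add_le : ∀ ⦃a b d⦄, 0 < a → a ≤ b → 0 ≤ d → k b * k (a + d) ≤ k a * k (b + d)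
  intervalIntegrable : ∀ ⦃t⦄, 0 < t → IntervalIntegrable k volume 0 t

/-- `r` is the resolvent of the convolution kernel `k`, that is, the solution of the Volterra
equation `r + μ (r ⋆ k) = k`. Positivity near `0` stands for the normalisation `r ∼ k`. -/
structure IsVolterraResolvent (μ : ℝ) (k r : ℝ → ℝ) : Prop where
  continuousOn : ContinuousOn r (Ioi 0)
  eventually_pos : ∀ᶠ t in 𝓝[>] 0, 0 < r t
  intervalIntegrable_conv : ∀ ⦃t⦄, 0 < t →
    IntervalIntegrable (fun x => r x * k (t - x)) volume 0 t
  volterra : ∀ ⦃t⦄, 0 < t → r t + μ * ∫ x in (0 : ℝ)..t, r x * k (t - x) = k t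

lemma intervalIntegral_nonneg_of_Ioo {f : ℝ → ℝ} {a b : ℝ} (hab : a ≤ b)
    (hf : ∀ x ∈ Ioo a b, 0 ≤ f x) : 0 ≤ ∫ x in a..b, f x := by
  rw [intervalIntegral.integral_of_le hab, integral_Ioc_eq_integral_Ioo]
  exact setIntegral_nonneg measurableSet_Ioo hf

lemma exists_first_nonpos {f : ℝ → ℝ} (hf : ContinuousOn f (Ioi 0))
    (pos_near_zero : ∀ᶠ t in 𝓝[>] 0, 0 < f t) {t : ℝ} (ht : 0 < t) (hft : f t ≤ 0) :
    ∃ T, 0 < T ∧ f T ≤ 0 ∧ ∀ s ∈ Ioo 0 T, 0 < f s := by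
  obtain ⟨ε, hε, pos_lt_ε⟩ := mem_nhdsGT_iff_exists_Ioo_subset.1 pos_near_zero
  have ε_le {s : ℝ} (hs : 0 < s) (hfs : f s ≤ 0) : ε ≤ s :=
    not_lt.1 fun h => hfs.not_gt (pos_lt_ε ⟨hs, h⟩)
  have closed : IsClosed (Icc ε t ∩ f ⁻¹' Iic 0) :=
    (hf.mono fun x hx => lt_of_lt_of_le hε hx.1).preimage_isClosed_of_isClosed
      isClosed_Icc isClosed_Iic
  obtain ⟨T, ⟨hT, hfT⟩, T_least⟩ := (isCompact_Icc.of_isClosed_subset closed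
    inter_subset_left).exists_isLeast ⟨t, ⟨ε_le ht hft, le_rfl⟩, hft⟩
  refine ⟨T, lt_of_lt_of_le hε hT.1, hfT, fun s ⟨hs, hsT⟩ => not_le.1 fun hfs => ?_⟩
  exact hsT.not_ge (T_least ⟨⟨ε_le hs hfs, hsT.le.trans hT.2⟩, hfs⟩)

variable {μ t : ℝ} {k r : ℝ → ℝ}

namespace LogConvexKernel

lemma exists_mul_integral_lt (hk : LogConvexKernel k) (c : ℝ) {ε : ℝ} (hε : 0 < ε) (ht : 0 < t) :
    ∃ h ∈ Ioo 0 t, c * ∫ x in (0 : ℝ)..h, k x < ε := by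
  have tendsto_zero : Tendsto (fun h => c * ∫ x in (0 : ℝ)..h, k x) (𝓝[>] 0) (𝓝 0) := by
    have := intervalIntegral.continuousOn_primitive_interval
      ((intervalIntegrable_iff' (by simp)).1 (hk.intervalIntegrable ht))
    rw [uIcc_of_le ht.le] at this
    simpa using ((this 0 (left_mem_Icc.2 ht.le)).mono_left
      (nhdsWithin_le_of_mem (Icc_mem_nhdsGT ht))).const_mul c
  exact ((eventually_mem_set.2 (Ioo_mem_nhdsGT ht)).and
    (tendsto_zero.eventually_lt_const hε)).exists

end LogConvexKernel

namespace IsVolterraResolvent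

lemma intervalIntegrable_conv_mono (hr : IsVolterraResolvent μ k r) (ht : 0 < t) {a b : ℝ}
    (ha : a ∈ Icc 0 t) (hb : b ∈ Icc 0 t) :
    IntervalIntegrable (fun x => r x * k (t - x)) volume a b := by
  rw [← uIcc_of_le ht.le] at ha hb
  exact (hr.intervalIntegrable_conv ht).mono_set (uIcc_subset_uIcc ha hb)

lemma integral_conv_le (hr : IsVolterraResolvent μ k r) (hk : LogConvexKernel k) {M s T : ℝ}
    (hs : 0 < s) (hsT : s < T) (hM : ∀ x ∈ Ioo s T, r x ≤ M) :
    ∫ x in s..T, r x * k (T - x) ≤ M * ∫ x in (0 : ℝ)..(T - s), k x := by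
  have hT := hs.trans hsT
  have integrable_kernel : IntervalIntegrable (fun x => k (T - x)) volume s T := by
    simpa using ((hk.intervalIntegrable (sub_pos.2 hsT)).comp_sub_left T).symm
  calc ∫ x in s..T, r x * k (T - x) ≤ ∫ x in s..T, M * k (T - x) := by
        refine intervalIntegral.integral_mono_on_of_le_Ioo hsT.le
          (hr.intervalIntegrable_conv_mono hT ⟨hs.le, hsT.le⟩ ⟨hT.le, le_rfl⟩)
          (integrable_kernel.const_mul M) fun x hx => ?_
        exact mul_le_mul_of_nonneg_right (hM x hx) (hk.pos (sub_pos.2 hx.2)).le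
    _ = M * ∫ x in (0 : ℝ)..(T - s), k x := by
        rw [intervalIntegral.integral_const_mul, intervalIntegral.integral_comp_sub_left k,
          sub_self]

-- Subtracts the Volterra equation at `s` from the one at `T`, scaled by `k s / k T`.
lemma mul_le_mul_integral_of_nonpos (hr : IsVolterraResolvent μ k r) (hk : LogConvexKernel k)
    (hμ : 0 ≤ μ) {s T : ℝ} (hs : 0 < s) (hsT : s < T) (hrT : r T ≤ 0)
    (r_nonneg : ∀ x ∈ Ioo 0 T, 0 ≤ r x) :
    r s * k T ≤ k s * (μ * ∫ x in s..T, r x * k (T - x)) := by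
  have hT := hs.trans hsT
  have integrable_left := hr.intervalIntegrable_conv_mono hT ⟨le_rfl, hT.le⟩ ⟨hs.le, hsT.le⟩
  have integrable_right := hr.intervalIntegrable_conv_mono hT ⟨hs.le, hsT.le⟩ ⟨hT.le, le_rfl⟩
  have volterra_s := hr.volterra hs
  have volterra_T := hr.volterra hT
  rw [← intervalIntegral.integral_add_adjacent_intervals integrable_left integrable_right]
    at volterra_T
  have left_le : k s * ∫ x in (0 : ℝ)..s, r x * k (T - x) ≤
      k T * ∫ x in (0 : ℝ)..s, r x * k (s - x) := by
    rw [← intervalIntegral.integral_const_mul, ← intervalIntegral.integral_const_mul]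
    refine intervalIntegral.integral_mono_on_of_le_Ioo hs.le (integrable_left.const_mul _)
      ((hr.intervalIntegrable_conv hs).const_mul _) fun x hx => ?_
    have log_convex := hk.mul_add_le (sub_pos.2 hx.2) (sub_le_self s hx.1.le) (sub_pos.2 hsT).le
    rw [add_sub_cancel, add_comm, sub_add_sub_cancel] at log_convex
    calc k s * (r x * k (T - x)) = r x * (k s * k (T - x)) := by ring
      _ ≤ r x * (k (s - x) * k T) := by
          have := r_nonneg x ⟨hx.1, hx.2.trans hsT⟩
          gcongr
      _ = k T * (r x * k (s - x)) := by ring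
  set L := ∫ x in (0 : ℝ)..s, r x * k (T - x)
  set R := ∫ x in s..T, r x * k (T - x)
  set S := ∫ x in (0 : ℝ)..s, r x * k (s - x)
  calc r s * k T = k s * k T - μ * (k T * S) := by rw [← volterra_s]; ring
    _ ≤ k s * (μ * (L + R)) - μ * (k s * L) := by
        gcongr
        · exact (hk.pos hs).le
        · linarith
    _ = k s * (μ * R) := by ring

theorem pos (hr : IsVolterraResolvent μ k r) (hk : LogConvexKernel k) (hμ : 0 ≤ μ) (ht : 0 < t) :
    0 < r t := by
  by_contra! hrt
  obtain ⟨T, hT, hrT, r_pos⟩ := exists_first_nonpos hr.continuousOn hr.eventually_pos ht hrt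
  obtain ⟨h, ⟨hh, hhT⟩, small⟩ :=
    hk.exists_mul_integral_lt (μ * k (T / 2)) (hk.pos hT) (half_pos hT)
  -- A maximum point `s` of `r` on `[T - h, T]` contradicts the comparison between `s` and `T`.
  obtain ⟨s, ⟨hhs, hsT⟩, s_max⟩ := isCompact_Icc.exists_isMaxOn
    (nonempty_Icc.2 (sub_le_self T hh.le))
    (hr.continuousOn.mono fun x hx => (by linarith [hx.1] : 0 < x))
  have rs_pos : 0 < r s :=
    (r_pos (T - h) ⟨by linarith, by linarith⟩).trans_le (s_max ⟨le_rfl, sub_le_self T hh.le⟩)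
  have hs : 0 < s := by linarith
  replace hsT : s < T := hsT.lt_of_ne fun h => by rw [h] at rs_pos; exact rs_pos.not_ge hrT
  have ks_le : k s ≤ k (T / 2) := hk.antitoneOn (half_pos hT) hs (by linarith)
  have integral_le : ∫ x in s..T, r x * k (T - x) ≤ r s * ∫ x in (0 : ℝ)..h, k x := by
    refine (hr.integral_conv_le hk hs hsT fun x hx =>
      s_max ⟨hhs.trans hx.1.le, hx.2.le⟩).trans (mul_le_mul_of_nonneg_left ?_ rs_pos.le)
    exact intervalIntegral.integral_mono_interval le_rfl (by linarith) (by linarith)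
      (ae_restrict_of_forall_mem measurableSet_Ioc fun x hx => (hk.pos hx.1).le)
      (hk.intervalIntegrable hh)
  have compare := hr.mul_le_mul_integral_of_nonpos hk hμ hs hsT hrT fun x hx => (r_pos x hx).le
  have : r s * k T < r s * k T := calc
    r s * k T ≤ k s * (μ * ∫ x in s..T, r x * k (T - x)) := compare
    _ ≤ k s * (μ * (r s * ∫ x in (0 : ℝ)..h, k x)) := by
        have := (hk.pos hs).le
        gcongr
    _ ≤ k (T / 2) * (μ * (r s * ∫ x in (0 : ℝ)..h, k x)) := by
        have := intervalIntegral_nonneg_of_Ioo hh.le fun x hx => (hk.pos hx.1).le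
        gcongr
    _ = r s * (μ * k (T / 2) * ∫ x in (0 : ℝ)..h, k x) := by ring
    _ < r s * k T := by gcongr
  exact lt_irrefl _ this

lemma le_kernel (hr : IsVolterraResolvent μ k r) (hk : LogConvexKernel k) (hμ : 0 ≤ μ)
    (ht : 0 < t) : r t ≤ k t := by
  have integral_nonneg := intervalIntegral_nonneg_of_Ioo ht.le fun x hx =>
    mul_nonneg (hr.pos hk hμ hx.1).le (hk.pos (sub_pos.2 hx.2)).le
  linarith [hr.volterra ht, mul_nonneg hμ integral_nonneg]

lemma intervalIntegrable (hr : IsVolterraResolvent μ k r) (hk : LogConvexKernel k) (hμ : 0 ≤ μ)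
    (ht : 0 < t) : IntervalIntegrable r volume 0 t := by
  have integrable_kernel := hk.intervalIntegrable ht
  rw [intervalIntegrable_iff_integrableOn_Ioc_of_le ht.le] at integrable_kernel ⊢
  refine integrable_kernel.mono' ((hr.continuousOn.mono fun x hx => hx.1).aestronglyMeasurable
    measurableSet_Ioc) (ae_restrict_of_forall_mem measurableSet_Ioc fun x hx => ?_)
  rw [Real.norm_eq_abs, abs_of_pos (hr.pos hk hμ hx.1)]
  exact hr.le_kernel hk hμ hx.1

lemma integral_nonneg (hr : IsVolterraResolvent μ k r) (hk : LogConvexKernel k) (hμ : 0 ≤ μ)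
    (ht : 0 < t) : 0 ≤ ∫ x in (0 : ℝ)..t, r x :=
  intervalIntegral_nonneg_of_Ioo ht.le fun _ hx => (hr.pos hk hμ hx.1).le

lemma integral_le_integral_kernel (hr : IsVolterraResolvent μ k r) (hk : LogConvexKernel k)
    (hμ : 0 ≤ μ) (ht : 0 < t) : ∫ x in (0 : ℝ)..t, r x ≤ ∫ x in (0 : ℝ)..t, k x :=
  intervalIntegral.integral_mono_on_of_le_Ioo ht.le (hr.intervalIntegrable hk hμ ht)
    (hk.intervalIntegrable ht) fun _ hx => hr.le_kernel hk hμ hx.1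

lemma mul_integral_le_one (hr : IsVolterraResolvent μ k r) (hk : LogConvexKernel k) (hμ : 0 ≤ μ)
    (ht : 0 < t) : μ * ∫ x in (0 : ℝ)..t, r x ≤ 1 := by
  have hkt := hk.pos ht
  have conv_ge : k t * ∫ x in (0 : ℝ)..t, r x ≤ ∫ x in (0 : ℝ)..t, r x * k (t - x) := by
    rw [← intervalIntegral.integral_const_mul]
    refine intervalIntegral.integral_mono_on_of_le_Ioo ht.le
      ((hr.intervalIntegrable hk hμ ht).const_mul _) (hr.intervalIntegrable_conv ht) fun x hx => ?_
    rw [mul_comm]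
    have := (hr.pos hk hμ hx.1).le
    gcongr
    exact hk.antitoneOn (sub_pos.2 hx.2) ht (sub_le_self t hx.1.le)
  refine le_of_mul_le_mul_left ?_ hkt
  calc k t * (μ * ∫ x in (0 : ℝ)..t, r x) = μ * (k t * ∫ x in (0 : ℝ)..t, r x) := by ring
    _ ≤ μ * ∫ x in (0 : ℝ)..t, r x * k (t - x) := by gcongr
    _ ≤ k t * 1 := by linarith [hr.volterra ht, hr.pos hk hμ ht]

lemma integral_conv_self_nonneg (hr : IsVolterraResolvent μ k r) (hk : LogConvexKernel k)
    (hμ : 0 ≤ μ) (ht : 0 < t) : 0 ≤ ∫ x in (0 : ℝ)..t, r x * r (t - x) :=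
  intervalIntegral_nonneg_of_Ioo ht.le fun _ hx =>
    mul_nonneg (hr.pos hk hμ hx.1).le (hr.pos hk hμ (sub_pos.2 hx.2)).le

-- One of `x` and `t - x` is at least `t / 2`, and `r` has mass at most `1 / μ`.
lemma mul_integral_conv_self_le (hr : IsVolterraResolvent μ k r) (hk : LogConvexKernel k)
    (hμ : 0 ≤ μ) (hrr : IntervalIntegrable (fun x => r x * r (t - x)) volume 0 t) (ht : 0 < t) :
    μ * ∫ x in (0 : ℝ)..t, r x * r (t - x) ≤ 2 * k (t / 2) := by
  have le_half {x : ℝ} (hx : 0 < x) (htx : t / 2 ≤ x) : r x ≤ k (t / 2) :=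
    (hr.le_kernel hk hμ hx).trans (hk.antitoneOn (half_pos ht) hx htx)
  have integrable := hr.intervalIntegrable hk hμ ht
  have integrable_reflect : IntervalIntegrable (fun x => r (t - x)) volume 0 t := by
    simpa using (integrable.comp_sub_left t).symm
  have conv_le : ∫ x in (0 : ℝ)..t, r x * r (t - x) ≤
      ∫ x in (0 : ℝ)..t, k (t / 2) * (r x + r (t - x)) := by
    refine intervalIntegral.integral_mono_on_of_le_Ioo ht.le hrr
      ((integrable.add integrable_reflect).const_mul _) fun x hx => ?_
    have left_pos := hr.pos hk hμ hx.1
    have right_pos := hr.pos hk hμ (sub_pos.2 hx.2)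
    rcases le_total (t / 2) x with h | h
    · nlinarith [le_half hx.1 h, hk.pos (half_pos ht)]
    · nlinarith [le_half (sub_pos.2 hx.2) (by linarith), hk.pos (half_pos ht)]
  rw [intervalIntegral.integral_const_mul, intervalIntegral.integral_add integrable
    integrable_reflect, intervalIntegral.integral_comp_sub_left r, sub_self, sub_zero] at conv_le
  have := (hk.pos (half_pos ht)).le
  set I := ∫ x in (0 : ℝ)..t, r x
  calc μ * ∫ x in (0 : ℝ)..t, r x * r (t - x) ≤ μ * (k (t / 2) * (I + I)) := by gcongr
    _ = 2 * k (t / 2) * (μ * I) := by ring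
    _ ≤ 2 * k (t / 2) * 1 := by gcongr; exact hr.mul_integral_le_one hk hμ ht
    _ = 2 * k (t / 2) := mul_one _

end IsVolterraResolvent

end VolterraResolvent

section Taylor

lemma abs_taylor_one_remainder_le {f f' f'' : ℝ → ℝ} {a b K : ℝ}
    (hf : ∀ x ∈ uIcc a b, HasDerivAt f (f' x) x) (hf' : ∀ x ∈ uIcc a b, HasDerivAt f' (f'' x) x)
    (hK : ∀ x ∈ uIcc a b, |f'' x| ≤ K) : |f b - f a - f' a * (b - a)| ≤ K * (b - a) ^ 2 := by
  have hK0 : 0 ≤ K := (abs_nonneg _).trans (hK a left_mem_uIcc)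
  have deriv_sub_le : ∀ x ∈ uIcc a b, |f' x - f' a| ≤ K * |b - a| := fun x hx =>
    ((convex_uIcc a b).norm_image_sub_le_of_norm_hasDerivWithin_le
      (fun y hy => (hf' y hy).hasDerivWithinAt) hK left_mem_uIcc hx).trans
      (mul_le_mul_of_nonneg_left (abs_sub_left_of_mem_uIcc hx) hK0)
  have remainder_hasDerivAt : ∀ x ∈ uIcc a b,
      HasDerivAt (fun x => f x - f' a * (x - a)) (f' x - f' a) x := fun x hx => by
    simpa only [mul_one] using!
      (hf x hx).fun_sub (((hasDerivAt_id' x).sub_const a).const_mul (f' a))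
  calc |f b - f a - f' a * (b - a)|
      = ‖f b - f' a * (b - a) - (f a - f' a * (a - a))‖ := by
        rw [Real.norm_eq_abs]
        ring_nf
    _ ≤ K * |b - a| * ‖b - a‖ :=
        (convex_uIcc a b).norm_image_sub_le_of_norm_hasDerivWithin_le
          (fun x hx => (remainder_hasDerivAt x hx).hasDerivWithinAt) deriv_sub_le
          left_mem_uIcc right_mem_uIcc
    _ = K * (b - a) ^ 2 := by rw [Real.norm_eq_abs, mul_assoc, ← sq, sq_abs]

variable {α μ n t : ℝ}

lemma logConvexKernel_fracKernel (hα : 0 < α) (hα1 : α ≤ 1) : LogConvexKernel (fracKernel α) where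
  pos _ ht := fracKernel_pos hα ht
  antitoneOn := antitoneOn_fracKernel hα hα1
  mul_add_le a b d ha hab hd := by
    have := Real.Gamma_pos_of_pos hα
    have hb := ha.trans_le hab
    simp only [fracKernel, div_mul_div_comm]
    rw [← Real.mul_rpow hb.le (by positivity), ← Real.mul_rpow ha.le (by positivity)]
    refine div_le_div_of_nonneg_right ?_ (by positivity)
    exact Real.rpow_le_rpow_of_nonpos (by positivity) (by nlinarith) (by linarith)
  intervalIntegrable _ ht := intervalIntegrable_fracKernel hα ht

lemma isVolterraResolvent_relaxationKernel (hα : 0 < α) (μ : ℝ) :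
    IsVolterraResolvent μ (fracKernel α) (relaxationKernel α μ) where
  continuousOn := continuousOn_fracSeries (geomBounded_resolventSymbol μ) hα hα
  eventually_pos := by
    have regular_part_continuous := ((geomBounded_resolventSymbol μ).continuous_mlSeries hα hα).comp
      (Real.continuous_rpow_const hα.le)
    have regular_part_pos : 0 < mlSeries α α (resolventSymbol μ) (0 ^ α) := by
      rw [Real.zero_rpow hα.ne', mlSeries_zero]
      simpa [resolventSymbol] using Real.Gamma_pos_of_pos hα
    filter_upwards [(regular_part_continuous.tendsto 0).eventually_const_lt regular_part_pos
      |>.filter_mono nhdsWithin_le_nhds, self_mem_nhdsWithin] with t hpos ht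
    exact mul_pos (Real.rpow_pos_of_pos ht _) hpos
  intervalIntegrable_conv t ht := by
    have hR := geomBounded_resolventSymbol μ
    simpa only [relaxationKernel, fracSeries_one_right] using
      intervalIntegrable_fracSeries_conv hR .one hα hα hα ht
  volterra _ ht := fracSeries_resolventSymbol_volterra hα hα μ ht

lemma intervalIntegrable_relaxationKernel_conv_self (hα : 0 < α) (μ : ℝ) (ht : 0 < t) :
    IntervalIntegrable (fun x => relaxationKernel α μ x * relaxationKernel α μ (t - x))
      volume 0 t :=
  intervalIntegrable_fracSeries_conv (geomBounded_resolventSymbol μ) (geomBounded_resolventSymbol μ)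
    hα hα hα ht

lemma relaxation_mem_Icc (hα : 0 < α) (hα1 : α ≤ 1) (hμ : 0 ≤ μ) (ht : 0 < t) :
    relaxation α μ t ∈ Icc (1 - μ * fracKernel (α + 1) t) 1 := by
  have hk := logConvexKernel_fracKernel hα hα1
  have hr := isVolterraResolvent_relaxationKernel hα μ
  have mass_le := hr.integral_le_integral_kernel hk hμ ht
  rw [integral_fracKernel hα ht] at mass_le
  have equation := relaxation_add_integral hα μ ht
  exact ⟨by linarith [mul_le_mul_of_nonneg_left mass_le hμ],
    by linarith [mul_nonneg hμ (hr.integral_nonneg hk hμ ht)]⟩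

lemma abs_deriv_relaxationKernel_le (hα : 0 < α) (hα1 : α ≤ 1) (hμ : 0 ≤ μ) (ht : 0 < t) :
    |(α * (relaxationKernel α μ t -
        μ * ∫ x in (0 : ℝ)..t, relaxationKernel α μ x * relaxationKernel α μ (t - x)) -
          relaxationKernel α μ t) / t| ≤ 4 * fracKernel α t / t := by
  have hk := logConvexKernel_fracKernel hα hα1
  have hr := isVolterraResolvent_relaxationKernel hα μ
  have conv_nonneg := mul_nonneg hμ (hr.integral_conv_self_nonneg hk hμ ht)
  have conv_le : μ * ∫ x in (0 : ℝ)..t, relaxationKernel α μ x * relaxationKernel α μ (t - x) ≤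
      4 * fracKernel α t := by
    linarith [fracKernel_half_le hα ht, hr.mul_integral_conv_self_le hk hμ
      (intervalIntegrable_relaxationKernel_conv_self hα μ ht) ht]
  have kernel_pos := hr.pos hk hμ ht
  have kernel_le := hr.le_kernel hk hμ ht
  rw [abs_div, abs_of_pos ht]
  refine div_le_div_of_nonneg_right ?_ ht.le
  set I := μ * ∫ x in (0 : ℝ)..t, relaxationKernel α μ x * relaxationKernel α μ (t - x)
  rw [show α * (relaxationKernel α μ t - I) - relaxationKernel α μ t =
    -((1 - α) * relaxationKernel α μ t + α * I) by ring, abs_neg,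
    abs_of_nonneg (by have := sub_nonneg.2 hα1; positivity)]
  nlinarith

lemma relaxation_taylor_near (hα : 0 < α) (hα1 : α ≤ 1) (hμ : 0 ≤ μ) (hn : 0 < n)
    (hnt : n / 2 ≤ t) :
    |relaxation α μ t - relaxation α μ n + μ * relaxationKernel α μ n * (t - n)| ≤
      16 * (μ * fracKernel (α + 1) n) / n ^ 2 * (t - n) ^ 2 := by
  have half_le : ∀ x ∈ uIcc n t, n / 2 ≤ x := fun x hx =>
    (le_inf (half_le_self hn.le) hnt).trans hx.1
  have pos {x : ℝ} (hx : n / 2 ≤ x) : 0 < x := (half_pos hn).trans_le hx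
  have second_deriv_le {x : ℝ} (hx : n / 2 ≤ x) :
      4 * fracKernel α x / x ≤ 16 * fracKernel (α + 1) n / n ^ 2 := by
    have kernel_le := ((antitoneOn_fracKernel hα hα1) (half_pos hn) (pos hx) hx).trans
      (fracKernel_half_le hα hn)
    have := fracKernel_pos hα hn
    have := fracKernel_pos (add_pos hα one_pos) hn
    calc 4 * fracKernel α x / x ≤ 4 * (2 * fracKernel α n) / (n / 2) := by gcongr
      _ = 16 * (α * fracKernel (α + 1) n) / n ^ 2 := by
          rw [← mul_fracKernel hα hn]
          field_simp
          norm_num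
      _ ≤ 16 * fracKernel (α + 1) n / n ^ 2 := by
          gcongr
          exact mul_le_of_le_one_left (by positivity) hα1
  convert abs_taylor_one_remainder_le (a := n) (b := t) (f := relaxation α μ)
    (f' := fun x => -(μ * relaxationKernel α μ x)) (K := 16 * (μ * fracKernel (α + 1) n) / n ^ 2)
    (fun x hx => hasDerivAt_relaxation hα μ (pos (half_le x hx)))
    (fun x hx => ((hasDerivAt_relaxationKernel hα μ (pos (half_le x hx))).const_mul μ).neg)
    (fun x hx => ?_) using 2
  · ring
  · rw [abs_neg, abs_mul, abs_of_nonneg hμ]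
    calc _ ≤ μ * (16 * fracKernel (α + 1) n / n ^ 2) := mul_le_mul_of_nonneg_left
          ((abs_deriv_relaxationKernel_le hα hα1 hμ (pos (half_le x hx))).trans
            (second_deriv_le (half_le x hx))) hμ
      _ = 16 * (μ * fracKernel (α + 1) n) / n ^ 2 := by ring

lemma relaxation_taylor_far (hα : 0 < α) (hα1 : α ≤ 1) (hμ : 0 ≤ μ) (ht : 0 < t)
    (htn : t ≤ n / 2) :
    |relaxation α μ t - relaxation α μ n + μ * relaxationKernel α μ n * (t - n)| ≤
      8 * (μ * fracKernel (α + 1) n) / n ^ 2 * (t - n) ^ 2 := by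
  have hn : 0 < n := by linarith
  have := Real.Gamma_pos_of_pos (add_pos hα one_pos)
  have hr := isVolterraResolvent_relaxationKernel hα μ
  have hk := logConvexKernel_fracKernel hα hα1
  obtain ⟨un_ge, un_le⟩ := relaxation_mem_Icc hα hα1 hμ hn
  obtain ⟨ut_ge, ut_le⟩ := relaxation_mem_Icc hα hα1 hμ ht
  have integral_mono : μ * fracKernel (α + 1) t ≤ μ * fracKernel (α + 1) n := by
    simp only [fracKernel, add_sub_cancel_right]
    gcongr
    linarith
  have slope_nonneg : 0 ≤ μ * relaxationKernel α μ n := mul_nonneg hμ (hr.pos hk hμ hn).le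
  have slope_mul_le : μ * relaxationKernel α μ n * n ≤ μ * fracKernel (α + 1) n := by
    rw [mul_assoc]
    refine mul_le_mul_of_nonneg_left ?_ hμ
    calc relaxationKernel α μ n * n ≤ fracKernel α n * n := by gcongr; exact hr.le_kernel hk hμ hn
      _ = α * fracKernel (α + 1) n := by rw [mul_comm, mul_fracKernel hα hn]
      _ ≤ fracKernel (α + 1) n :=
          mul_le_of_le_one_left (fracKernel_pos (add_pos hα one_pos) hn).le hα1
  set M := μ * fracKernel (α + 1) n
  set d := μ * relaxationKernel α μ n
  have bound_nonneg : 0 ≤ M := (mul_nonneg slope_nonneg hn.le).trans slope_mul_le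
  have relative_gap : 1 / 4 ≤ (t - n) ^ 2 / n ^ 2 := by
    rw [div_le_div_iff₀ (by norm_num) (by positivity)]
    nlinarith
  have secant_bound : |d * (t - n)| ≤ M := abs_le.2 ⟨by nlinarith, by nlinarith⟩
  have increment_bound : |relaxation α μ t - relaxation α μ n| ≤ M :=
    abs_le.2 ⟨by linarith, by linarith⟩
  calc |relaxation α μ t - relaxation α μ n + d * (t - n)|
      ≤ M + M := (abs_add_le _ _).trans (add_le_add increment_bound secant_bound)
    _ = 8 * M * (1 / 4) := by ring
    _ ≤ 8 * M * ((t - n) ^ 2 / n ^ 2) := by gcongr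
    _ = 8 * M / n ^ 2 * (t - n) ^ 2 := by ring

lemma relaxation_taylor (hα : 0 < α) (hα1 : α ≤ 1) (hμ : 0 ≤ μ) (hn : 0 < n) (ht : 0 < t) :
    |relaxation α μ t - relaxation α μ n + μ * relaxationKernel α μ n * (t - n)| ≤
      16 * (μ * fracKernel (α + 1) n) / n ^ 2 * (t - n) ^ 2 := by
  rcases le_total (n / 2) t with near | far
  · exact relaxation_taylor_near hα hα1 hμ hn near
  · refine (relaxation_taylor_far hα hα1 hμ ht far).trans ?_
    have := fracKernel_pos (add_pos hα one_pos) hn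
    gcongr
    norm_num

end Taylor

section ErlangTransform

/-- The density `e^{-s} s^m / m!` of the Erlang distribution of shape `m + 1` and rate `1`, whose
mean and variance are both `m + 1`. -/
noncomputable def erlangDensity (m : ℕ) (s : ℝ) : ℝ := Real.exp (-s) * s ^ m / m.factorial

lemma continuous_erlangDensity (m : ℕ) : Continuous (erlangDensity m) := by
  unfold erlangDensity
  fun_prop

lemma erlangDensity_pos (m : ℕ) {s : ℝ} (hs : 0 < s) : 0 < erlangDensity m s := by
  unfold erlangDensity
  positivity

lemma erlangDensity_mul_self (m : ℕ) (s : ℝ) :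
    erlangDensity m s * s = (m + 1) * erlangDensity (m + 1) s := by
  rw [erlangDensity, erlangDensity, Nat.factorial_succ, Nat.cast_mul, Nat.cast_succ, pow_succ]
  field_simp

lemma sum_antidiagonal_erlangDensity_mul (m : ℕ) (s t : ℝ) :
    ∑ p ∈ antidiagonal m, erlangDensity p.1 s * erlangDensity p.2 t = erlangDensity m (s + t) := by
  simp only [erlangDensity]
  rw [(Commute.all s t).add_pow', Finset.mul_sum, Finset.sum_div]
  refine Finset.sum_congr rfl fun p hp => ?_
  have factorial_eq : ((m.choose p.1 : ℕ) : ℝ) * p.1.factorial * p.2.factorial = m.factorial := by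
    rw [← mem_antidiagonal.1 hp, Nat.choose_symm_add]
    exact_mod_cast Nat.add_choose_mul_factorial_mul_factorial p.1 p.2
  rw [neg_add, Real.exp_add, nsmul_eq_mul, ← factorial_eq]
  have : ((m.choose p.1 : ℕ) : ℝ) ≠ 0 := fun h => by
    rw [h, zero_mul, zero_mul] at factorial_eq
    exact m.factorial_ne_zero (by exact_mod_cast factorial_eq.symm)
  field_simp

lemma cqWeight_neg {β : ℝ} (hβ : 0 < β) (j : ℕ) :
    cqWeight (-β) j = Real.Gamma (j + β) / (Real.Gamma β * j.factorial) := by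
  have gamma_shift : Real.Gamma (j + β) =
      Real.Gamma β * ((-1) ^ j * ∏ i ∈ Finset.range j, (-β - i)) := by
    induction j with
    | zero => simp
    | succ j ih =>
      rw [Finset.prod_range_succ, Nat.cast_succ, add_right_comm, Real.Gamma_add_one (by positivity),
        ih]
      ring
  rw [gamma_shift, cqWeight, mul_div_mul_left _ _ (Real.Gamma_pos_of_pos hβ).ne']

/-- Integrability of `f` against every Erlang density on `(0, ∞)`. -/
def ErlangIntegrable (f : ℝ → ℝ) : Prop :=
  ∀ m, IntegrableOn (fun s => erlangDensity m s * f s) (Ioi 0)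

/-- The generating function `∑ ξ^m E[f(S_m)]` of the Erlang averages of `f`. It is the Laplace
transform of `f` at `1 - ξ`, the symbol of the backward Euler difference quotient with unit step;
meaningful for `ErlangIntegrable` functions. -/
noncomputable def erlangTransform (f : ℝ → ℝ) : ℝ⟦X⟧ :=
  PowerSeries.mk fun m => ∫ s in Ioi 0, erlangDensity m s * f s

lemma erlangDensity_mul_fracKernel_eq {β s : ℝ} (hs : 0 < s) (m : ℕ) :
    erlangDensity m s * fracKernel β s =
      Real.exp (-s) * s ^ ((m + β : ℝ) - 1) / (Real.Gamma β * m.factorial) := by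
  rw [add_sub_assoc, Real.rpow_add hs, Real.rpow_natCast, erlangDensity, fracKernel,
    div_mul_div_comm, mul_assoc, mul_comm (Real.Gamma β)]

lemma erlangIntegrable_fracKernel {β : ℝ} (hβ : 0 < β) : ErlangIntegrable (fracKernel β) :=
  fun m => IntegrableOn.congr_fun
    ((Real.GammaIntegral_convergent (s := m + β) (by positivity)).div_const _)
    (fun _ hs => (erlangDensity_mul_fracKernel_eq hs m).symm) measurableSet_Ioi

lemma erlangTransform_fracKernel {β : ℝ} (hβ : 0 < β) :
    erlangTransform (fracKernel β) = PowerSeries.mk (cqWeight (-β)) := by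
  ext m
  rw [erlangTransform, coeff_mk, coeff_mk, cqWeight_neg hβ, Real.Gamma_eq_integral (by positivity),
    ← integral_div]
  exact setIntegral_congr_fun measurableSet_Ioi fun s hs => erlangDensity_mul_fracKernel_eq hs m

lemma erlangTransform_one : erlangTransform (fun _ => 1) = PowerSeries.mk 1 := by
  rw [← funext fracKernel_one, erlangTransform_fracKernel one_pos]
  ext m
  rw [coeff_mk, coeff_mk, cqWeight_neg one_pos, Real.Gamma_nat_eq_factorial, Real.Gamma_one,
    one_mul, Pi.one_apply, div_self (by positivity)]

lemma integrableOn_erlangDensity (m : ℕ) : IntegrableOn (erlangDensity m) (Ioi 0) := by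
  simpa only [fracKernel_one, mul_one] using erlangIntegrable_fracKernel one_pos m

lemma integral_erlangDensity (m : ℕ) : ∫ s in Ioi 0, erlangDensity m s = 1 := by
  simpa only [erlangTransform, coeff_mk, mul_one, Pi.one_apply] using
    congrArg (coeff m) erlangTransform_one

lemma erlangDensity_mul_sub_mean (m : ℕ) (s : ℝ) :
    erlangDensity m s * (s - (m + 1)) =
      (m + 1) * erlangDensity (m + 1) s - (m + 1) * erlangDensity m s := by
  rw [mul_sub, erlangDensity_mul_self, mul_comm _ (m + 1 : ℝ)]

lemma integrableOn_erlangDensity_mul_sub_mean (m : ℕ) :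
    IntegrableOn (fun s => erlangDensity m s * (s - (m + 1))) (Ioi 0) := by
  simp only [erlangDensity_mul_sub_mean]
  exact ((integrableOn_erlangDensity _).const_mul _).sub
    ((integrableOn_erlangDensity _).const_mul _)

lemma integral_erlangDensity_mul_sub_mean (m : ℕ) :
    ∫ s in Ioi 0, erlangDensity m s * (s - (m + 1)) = 0 := by
  simp only [erlangDensity_mul_sub_mean]
  rw [integral_sub ((integrableOn_erlangDensity _).const_mul _)
    ((integrableOn_erlangDensity _).const_mul _), integral_const_mul, integral_const_mul,
    integral_erlangDensity, integral_erlangDensity, sub_self]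

lemma erlangDensity_mul_sub_mean_sq (m : ℕ) (s : ℝ) :
    erlangDensity m s * (s - (m + 1)) ^ 2 = (m + 1) * erlangDensity (m + 1) s +
      (m + 1) * (erlangDensity (m + 1) s * (s - ((m + 1 : ℕ) + 1)) -
        erlangDensity m s * (s - (m + 1))) := by
  have := erlangDensity_mul_self m s
  push_cast
  linear_combination (s - (m + 1)) * this

lemma integrableOn_erlangDensity_mul_sub_mean_sq (m : ℕ) :
    IntegrableOn (fun s => erlangDensity m s * (s - (m + 1)) ^ 2) (Ioi 0) := by
  simp only [erlangDensity_mul_sub_mean_sq]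
  exact ((integrableOn_erlangDensity _).const_mul _).add
    (((integrableOn_erlangDensity_mul_sub_mean _).sub
      (integrableOn_erlangDensity_mul_sub_mean _)).const_mul _)

lemma integral_erlangDensity_mul_sub_mean_sq (m : ℕ) :
    ∫ s in Ioi 0, erlangDensity m s * (s - (m + 1)) ^ 2 = (m + 1 : ℝ) := by
  have centered_succ := integrableOn_erlangDensity_mul_sub_mean (m + 1)
  have centered := integrableOn_erlangDensity_mul_sub_mean m
  simp only [erlangDensity_mul_sub_mean_sq]
  rw [integral_add ((integrableOn_erlangDensity _).const_mul _) ?_, integral_const_mul,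
    integral_const_mul, integral_sub centered_succ centered, integral_erlangDensity,
    integral_erlangDensity_mul_sub_mean, integral_erlangDensity_mul_sub_mean]
  · ring
  · exact (centered_succ.sub centered).const_mul _

-- The linear term averages out, and the quadratic one averages to the variance.
lemma abs_coeff_erlangTransform_sub_le {f : ℝ → ℝ} {K d : ℝ} {m : ℕ} (hf : ErlangIntegrable f)
    (hK : ∀ s, 0 < s → |f s - f (m + 1) - d * (s - (m + 1))| ≤ K * (s - (m + 1)) ^ 2) :
    |coeff m (erlangTransform f) - f (m + 1)| ≤ K * (m + 1) := by
  have density := integrableOn_erlangDensity m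
  have centered := integrableOn_erlangDensity_mul_sub_mean m
  have remainder_average : coeff m (erlangTransform f) - f (m + 1) =
      ∫ s in Ioi 0, erlangDensity m s * (f s - f (m + 1) - d * (s - (m + 1))) := by
    have split (s : ℝ) : erlangDensity m s * (f s - f (m + 1) - d * (s - (m + 1))) =
        erlangDensity m s * f s - f (m + 1) * erlangDensity m s -
          d * (erlangDensity m s * (s - (m + 1))) := by ring
    simp only [split]
    rw [integral_sub ?_ (centered.const_mul d),
      integral_sub (hf m) (density.const_mul _), integral_const_mul, integral_const_mul,
      integral_erlangDensity, integral_erlangDensity_mul_sub_mean, erlangTransform, coeff_mk,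
      mul_one, mul_zero, sub_zero]
    exact (hf m).sub (density.const_mul _)
  calc |coeff m (erlangTransform f) - f (m + 1)|
      ≤ ∫ s in Ioi 0, K * (erlangDensity m s * (s - (m + 1)) ^ 2) := by
        rw [remainder_average, ← Real.norm_eq_abs]
        refine norm_integral_le_of_norm_le
          ((integrableOn_erlangDensity_mul_sub_mean_sq m).const_mul K) ?_
        filter_upwards [ae_restrict_mem measurableSet_Ioi] with s hs
        have density_pos := erlangDensity_pos m hs
        rw [Real.norm_eq_abs, abs_mul, abs_of_pos density_pos, mul_left_comm]
        exact mul_le_mul_of_nonneg_left (hK s hs) density_pos.le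
    _ = K * (m + 1) := by rw [integral_const_mul, integral_erlangDensity_mul_sub_mean_sq]

variable {f g : ℝ → ℝ}

lemma erlangDensity_mul_integral_conv {t : ℝ} (m : ℕ)
    (hfg : IntervalIntegrable (fun x => f x * g (t - x)) volume 0 t) :
    erlangDensity m t * ∫ x in (0 : ℝ)..t, f x * g (t - x) =
      ∑ p ∈ antidiagonal m, ∫ x in (0 : ℝ)..t,
        erlangDensity p.1 x * f x * (erlangDensity p.2 (t - x) * g (t - x)) := by
  simp only [mul_mul_mul_comm (erlangDensity _ _) (f _)]
  rw [← intervalIntegral.integral_finsetSum, ← intervalIntegral.integral_const_mul]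
  · simp only [← Finset.sum_mul, sum_antidiagonal_erlangDensity_mul, add_sub_cancel]
  · exact fun p _ => hfg.continuousOn_mul (Continuous.continuousOn
      ((continuous_erlangDensity p.1).mul ((continuous_erlangDensity p.2).comp (by fun_prop))))

lemma integrableOn_integral_conv (hf : IntegrableOn f (Ioi 0)) (hg : IntegrableOn g (Ioi 0)) :
    IntegrableOn (fun t => ∫ x in (0 : ℝ)..t, f x * g (t - x)) (Ioi 0) :=
  (integrable_indicator_iff measurableSet_Ioi).1
    (integrable_posConvolution hf hg (ContinuousLinearMap.mul ℝ ℝ))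

lemma ErlangIntegrable.conv (hf : ErlangIntegrable f) (hg : ErlangIntegrable g)
    (hfg : ∀ t, 0 < t → IntervalIntegrable (fun x => f x * g (t - x)) volume 0 t) :
    ErlangIntegrable (fun t => ∫ x in (0 : ℝ)..t, f x * g (t - x)) := fun m =>
  (integrable_finsetSum _ fun (p : ℕ × ℕ) _ =>
    integrableOn_integral_conv (hf p.1) (hg p.2)).congr <| by
    filter_upwards [ae_restrict_mem measurableSet_Ioi] with t ht
    exact (erlangDensity_mul_integral_conv m (hfg t ht)).symm

lemma erlangTransform_conv (hf : ErlangIntegrable f) (hg : ErlangIntegrable g)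
    (hfg : ∀ t, 0 < t → IntervalIntegrable (fun x => f x * g (t - x)) volume 0 t) :
    erlangTransform (fun t => ∫ x in (0 : ℝ)..t, f x * g (t - x)) =
      erlangTransform f * erlangTransform g := by
  ext m
  simp only [erlangTransform, coeff_mul, coeff_mk]
  rw [setIntegral_congr_fun measurableSet_Ioi fun t ht =>
    erlangDensity_mul_integral_conv m (hfg t ht),
    integral_finsetSum]
  · exact Finset.sum_congr rfl fun p _ =>
      integral_posConvolution (hf p.1) (hg p.2) (ContinuousLinearMap.mul ℝ ℝ)
  · exact fun p _ => integrableOn_integral_conv (hf p.1) (hg p.2)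

lemma erlangTransform_add_const_mul (μ : ℝ) (hf : ErlangIntegrable f) (hg : ErlangIntegrable g) :
    erlangTransform (fun t => f t + μ * g t) =
      erlangTransform f + C μ * erlangTransform g := by
  ext m
  simp only [erlangTransform, map_add, coeff_C_mul, coeff_mk, mul_add, mul_left_comm _ μ]
  rw [integral_add (hf m) ((hg m).const_mul μ), integral_const_mul]

lemma erlangTransform_congr (hfg : ∀ t, 0 < t → f t = g t) :
    erlangTransform f = erlangTransform g := by
  ext m
  simp only [erlangTransform, coeff_mk]
  exact setIntegral_congr_fun measurableSet_Ioi fun t ht =>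
    congrArg (erlangDensity m t * ·) (hfg t ht)

end ErlangTransform

section Scheme

variable {α μ : ℝ}

lemma erlangIntegrable_relaxation (hα : 0 < α) (hα1 : α ≤ 1) (hμ : 0 ≤ μ) :
    ErlangIntegrable (relaxation α μ) := fun m => by
  refine Integrable.mono' ((integrableOn_erlangDensity m).add
    ((erlangIntegrable_fracKernel (add_pos hα one_pos) m).const_mul μ)) ?_ ?_
  · exact ((continuous_erlangDensity m).continuousOn.mul (continuousOn_fracSeries
      (geomBounded_resolventSymbol μ) hα one_pos)).aestronglyMeasurable measurableSet_Ioi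
  · filter_upwards [ae_restrict_mem measurableSet_Ioi] with t ht
    obtain ⟨ge_bound, le_one⟩ := relaxation_mem_Icc hα hα1 hμ ht
    have := mul_nonneg hμ (fracKernel_pos (add_pos hα one_pos) ht).le
    have density_pos := erlangDensity_pos m ht
    rw [Real.norm_eq_abs, abs_mul, abs_of_pos density_pos]
    calc erlangDensity m t * |relaxation α μ t|
        ≤ erlangDensity m t * (1 + μ * fracKernel (α + 1) t) :=
          mul_le_mul_of_nonneg_left (abs_le.2 ⟨by linarith, by linarith⟩) density_pos.le
      _ = erlangDensity m t + μ * (erlangDensity m t * fracKernel (α + 1) t) := by ring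

lemma erlangTransform_relaxation (hα : 0 < α) (hα1 : α ≤ 1) (hμ : 0 ≤ μ) :
    erlangTransform (relaxation α μ) +
      C μ * (erlangTransform (relaxation α μ) * PowerSeries.mk (cqWeight (-α))) =
        PowerSeries.mk 1 := by
  have hu := erlangIntegrable_relaxation hα hα1 hμ
  have hk := erlangIntegrable_fracKernel hα
  have conv_integrable (t : ℝ) (ht : 0 < t) :
      IntervalIntegrable (fun x => relaxation α μ x * fracKernel α (t - x)) volume 0 t := by
    simpa only [relaxation, fracSeries_one_right] using
      intervalIntegrable_fracSeries_conv (geomBounded_resolventSymbol μ) .one hα one_pos hα ht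
  rw [← erlangTransform_fracKernel hα, ← erlangTransform_conv hu hk conv_integrable,
    ← erlangTransform_add_const_mul μ hu (hu.conv hk conv_integrable), ← erlangTransform_one]
  refine erlangTransform_congr fun t ht => ?_
  rw [← fracKernel_one t]
  exact fracSeries_resolventSymbol_volterra hα one_pos μ ht

lemma mk_cqWeight_eq_rescale (α : ℝ) :
    PowerSeries.mk (cqWeight α) = rescale (-1) (binomialSeries ℝ α) := by
  ext j
  rw [coeff_mk, coeff_rescale, binomialSeries_coeff, smul_eq_mul, mul_one, cqWeight,
    Ring.choose_eq_smul, ← Polynomial.aeval_eq_smeval, Polynomial.aeval_def,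
    Polynomial.eval₂_eq_eval_map, descPochhammer_map, ← descPochhammer_eval_eq_prod_range,
    smul_eq_mul, mul_div_assoc, div_eq_inv_mul]

lemma mk_cqWeight_mul_mk_cqWeight_neg (α : ℝ) :
    PowerSeries.mk (cqWeight α) * PowerSeries.mk (cqWeight (-α)) = 1 := by
  simp only [mk_cqWeight_eq_rescale]
  rw [← map_mul, ← binomialSeries_add, add_neg_cancel, binomialSeries_zero, map_one]

lemma mk_cqWeight_mul_mk_succ {F : ℕ → ℝ} (hF₀ : F 0 = 1)
    (hF : ∀ n : ℕ, 1 ≤ n →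
      ∑ j ∈ Finset.range (n + 1), cqWeight α j * (F (n - j) - 1) + μ * F n = 0) :
    (PowerSeries.mk (cqWeight α) + C μ) * PowerSeries.mk (fun m => F (m + 1)) =
      PowerSeries.mk (cqWeight α) * PowerSeries.mk 1 := by
  rw [← sub_eq_zero, add_mul, add_sub_right_comm, ← mul_sub]
  ext m
  rw [map_add, coeff_C_mul, coeff_mul, map_zero, ← hF (m + 1) (by lia), Finset.sum_range_succ,
    Nat.sub_self, hF₀, sub_self, mul_zero, add_zero,
    Finset.Nat.sum_antidiagonal_eq_sum_range_succ_mk]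
  simp only [map_sub, coeff_mk, Pi.one_apply]
  congr 1
  refine Finset.sum_congr rfl fun j hj => ?_
  rw [Nat.succ_sub (Finset.mem_range_succ_iff.1 hj)]

lemma scheme_eq_coeff_erlangTransform (hα : 0 < α) (hα1 : α ≤ 1) (hμ : 0 ≤ μ) {F : ℕ → ℝ}
    (hF₀ : F 0 = 1) (hF : ∀ n : ℕ, 1 ≤ n →
      ∑ j ∈ Finset.range (n + 1), cqWeight α j * (F (n - j) - 1) + μ * F n = 0) (m : ℕ) :
    F (m + 1) = coeff m (erlangTransform (relaxation α μ)) := by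
  have symbol_ne_zero : PowerSeries.mk (cqWeight α) + C μ ≠ 0 := fun h => by
    have constant_term := congrArg (coeff 0) h
    simp only [map_add, coeff_mk, coeff_zero_C, map_zero, cqWeight, pow_zero, Finset.range_zero,
      Finset.prod_empty, Nat.factorial_zero, Nat.cast_one, div_one, mul_one] at constant_term
    linarith
  have series_eq : PowerSeries.mk (fun m => F (m + 1)) = erlangTransform (relaxation α μ) := by
    refine mul_left_cancel₀ symbol_ne_zero ?_
    rw [mk_cqWeight_mul_mk_succ hF₀ hF, ← erlangTransform_relaxation hα hα1 hμ]
    linear_combination C μ * erlangTransform (relaxation α μ) * mk_cqWeight_mul_mk_cqWeight_neg α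
  rw [← series_eq, coeff_mk]

lemma abs_relaxation_sub_scheme_le (hα : 0 < α) (hα1 : α ≤ 1) (hμ : 0 ≤ μ) {F : ℕ → ℝ}
    (hF₀ : F 0 = 1) (hF : ∀ n : ℕ, 1 ≤ n →
      ∑ j ∈ Finset.range (n + 1), cqWeight α j * (F (n - j) - 1) + μ * F n = 0)
    {n : ℕ} (hn : 1 ≤ n) :
    |relaxation α μ n - F n| ≤ 16 / Real.Gamma (α + 1) * μ * (n : ℝ) ^ (α - 1) := by
  obtain ⟨m, rfl⟩ := Nat.exists_eq_add_of_le' hn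
  have hm : (0 : ℝ) < m + 1 := by positivity
  rw [abs_sub_comm, scheme_eq_coeff_erlangTransform hα hα1 hμ hF₀ hF, Nat.cast_succ]
  refine (abs_coeff_erlangTransform_sub_le (erlangIntegrable_relaxation hα hα1 hμ)
    (K := 16 * (μ * fracKernel (α + 1) (m + 1)) / (m + 1) ^ 2)
    (d := -(μ * relaxationKernel α μ (m + 1))) fun s hs => ?_).trans_eq ?_
  · rw [neg_mul, sub_neg_eq_add]
    exact relaxation_taylor hα hα1 hμ hm hs
  · rw [fracKernel, add_sub_cancel_right, Real.rpow_sub_one hm.ne']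
    field_simp

end Scheme

theorem cq_ml_weighted_error_bound_general (α : ℝ) (hα : α ∈ Set.Ioc (0 : ℝ) 1) :
    ∃ c : ℝ, 0 < c ∧
      ∀ τ lam : ℝ, 0 < τ → 0 < lam → ∀ F : ℕ → ℝ, F 0 = 1 →
        (∀ n : ℕ, 1 ≤ n →
          τ ^ (-α) * ∑ j ∈ Finset.range (n + 1), cqWeight α j * (F (n - j) - 1)
            + lam * F n = 0) →
        ∀ n : ℕ, 1 ≤ n →
          lam⁻¹ * |mittagLeffler α (-(lam * ((n : ℝ) * τ) ^ α)) - F n|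
            ≤ c * τ * ((n : ℝ) * τ) ^ (α - 1) := by
  obtain ⟨hα0, hα1⟩ := hα
  have := Real.Gamma_pos_of_pos (add_pos hα0 one_pos)
  refine ⟨16 / Real.Gamma (α + 1), by positivity, fun τ lam hτ hlam F hF₀ hF n hn => ?_⟩
  have unit_step_scheme (k : ℕ) (hk : 1 ≤ k) :
      ∑ j ∈ Finset.range (k + 1), cqWeight α j * (F (k - j) - 1) + lam * τ ^ α * F k = 0 := by
    have scaled := congrArg (τ ^ α * ·) (hF k hk)
    simp only [mul_add, ← mul_assoc, ← Real.rpow_add hτ, add_neg_cancel, Real.rpow_zero, one_mul,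
      mul_zero] at scaled
    rwa [mul_comm lam]
  have error_le := abs_relaxation_sub_scheme_le hα0 hα1 (by positivity) hF₀ unit_step_scheme hn
  rw [← mittagLeffler_eq_relaxation, mul_assoc lam, ← Real.mul_rpow hτ.le (by positivity),
    mul_comm τ] at error_le
  rw [inv_mul_le_iff₀ hlam]
  refine error_le.trans_eq ?_
  rw [Real.mul_rpow (by positivity) hτ.le, Real.rpow_sub_one hτ.ne']
  field_simp

/-- Weighted error bound for the backward Euler CQ approximation `F_τ^n(λ)`
(characterized by the discrete scheme `∂̄_τ^α(F^n − 1) + λ F^n = 0`, `F^0 = 1`):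
`λ⁻¹ |E_{α,1}(-λ t_n^α) − F_τ^n(λ)| ≤ c τ t_n^{α-1}`. -/
theorem cq_ml_weighted_error_bound (α : ℝ) (hα : α ∈ Set.Ioo (0 : ℝ) 1) :
    ∃ c : ℝ, 0 < c ∧
      ∀ τ lam : ℝ, 0 < τ → 0 < lam → ∀ F : ℕ → ℝ, F 0 = 1 →
        (∀ n : ℕ, 1 ≤ n →
          τ ^ (-α) * ∑ j ∈ Finset.range (n + 1), cqWeight α j * (F (n - j) - 1)
            + lam * F n = 0) →
        ∀ n : ℕ, 1 ≤ n →
          lam⁻¹ * |mittagLeffler α (-(lam * ((n : ℝ) * τ) ^ α)) - F n|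
            ≤ c * τ * ((n : ℝ) * τ) ^ (α - 1) :=
  cq_ml_weighted_error_bound_general α (Ioo_subset_Ioc_self hα)
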